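/- Let G ≤ ASP be a subgroup closed under the operation ◁. For any α₁, …, α_ℓ, γ ∈ G, if α₁ ⋆ ⋯ ⋆ α_ℓ ≥ γ in Bruhat order and χ_{α₁} + ⋯ + χ_{α_ℓ} = χ_γ, then there exist β₁, …, β_ℓ ∈ G with β_i ≤_χ α_i for each i, such that β₁ ⋆ ⋯ ⋆ β_ℓ = β₁ ∘ ⋯ ∘ β_ℓ = γ and the tuple (β₁, …, β_ℓ) is reduced, i.e. for each 1 ≤ n ≤ ℓ, Inv(β_n) ∩ Inv((β_{n+1} ∘ ⋯ ∘ β_ℓ)⁻¹) = ∅. -/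

import Mathlib

/-- A permutation of ℤ is almost-sign-preserving if only finitely many `n` have
exactly one of `n`, `α n` negative. -/
def ASP (α : Equiv.Perm ℤ) : Prop := {n : ℤ | Xor' (n < 0) (α n < 0)}.Finite

/-- The slipface function `s_α(a,b) = #{n ≥ b : α n < a}`. -/
noncomputable def sF (α : Equiv.Perm ℤ) : ℤ → ℤ → ℕ :=
  fun a b => {n : ℤ | b ≤ n ∧ α n < a}.ncard

/-- The shift `χ_α = s_α(0,0) - s_{α⁻¹}(0,0)`. -/
noncomputable def shiftASP (α : Equiv.Perm ℤ) : ℤ :=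
  (sF α 0 0 : ℤ) - (sF α⁻¹ 0 0 : ℤ)

/-- Bruhat order on ASP: pointwise comparison of slipface functions. -/
def BruhatLE (α β : Equiv.Perm ℤ) : Prop := ∀ a b : ℤ, sF α a b ≤ sF β a b

/-- `α ≤_χ β`: Bruhat order together with equality of shifts. -/
def BruhatLEchi (α β : Equiv.Perm ℤ) : Prop := BruhatLE α β ∧ shiftASP α = shiftASP β

/-- `γ` is the Demazure product `α ⋆ β`:
`s_γ(a,b) = min_{ℓ} [s_α(a,ℓ) + s_β(ℓ,b)]`. -/
def IsDem (α β γ : Equiv.Perm ℤ) : Prop :=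
  ∀ a b : ℤ, IsLeast {x : ℕ | ∃ ℓ : ℤ, x = sF α a ℓ + sF β ℓ b} (sF γ a b)

/-- `γ = α ◁ β`: `s_γ(a,b) = max_ℓ [s_α(a,ℓ) - s_{β⁻¹}(b,ℓ)]`. -/
def IsTriL (α β γ : Equiv.Perm ℤ) : Prop :=
  ∀ a b : ℤ, IsGreatest {x : ℤ | ∃ ℓ : ℤ, x = (sF α a ℓ : ℤ) - (sF β⁻¹ b ℓ : ℤ)}
    ((sF γ a b : ℤ))

/-- `γ = α ▷ β`: `s_γ(a,b) = max_ℓ [s_β(ℓ,b) - s_{α⁻¹}(ℓ,a)]`. -/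
def IsTriR (α β γ : Equiv.Perm ℤ) : Prop :=
  ∀ a b : ℤ, IsGreatest {x : ℤ | ∃ ℓ : ℤ, x = (sF β ℓ b : ℤ) - (sF α⁻¹ ℓ a : ℤ)}
    ((sF γ a b : ℤ))

/-- The set of inversions of a permutation. -/
def InvSet (α : Equiv.Perm ℤ) : Set (ℤ × ℤ) := {p : ℤ × ℤ | p.1 < p.2 ∧ α p.2 < α p.1}

/-- `IsDemList L γ` asserts that `γ` is the iterated Demazure product of the list `L`,
computed as `α₁ ⋆ (α₂ ⋆ (⋯ ⋆ α_ℓ))` (the product is associative). -/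
def IsDemList : List (Equiv.Perm ℤ) → Equiv.Perm ℤ → Prop
  | [], γ => γ = 1
  | α :: L, γ => ∃ δ : Equiv.Perm ℤ, ASP δ ∧ IsDemList L δ ∧ IsDem α δ γ

/-!
The proof works with slipface functions instead of permutations. Call `s : ℤ → ℤ → ℤ` a *slip
function* of shift `χ` (`Slip s χ`) if it satisfies the Monge inequality and, in each variable
separately, equals `0` far out on one side and `a - b + χ` far out on the other. The slipface
functions of almost-sign-preserving permutations are exactly the slip functions
(`slip_sF`, `Slip.exists_perm`). Both `min_ℓ [s(a,ℓ) + t(ℓ,b)]` and `max_ℓ [s(a,ℓ) - t(b,ℓ)]` are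
again slip functions: the Monge inequality follows by comparing the two optimal values of `ℓ`.
So `α ⋆ β` and `γ ◁ δ⁻¹` exist, with shifts `χ_α + χ_β` and `χ_γ - χ_δ`.

For two factors, suppose `γ ≤ α ⋆ δ` and put `c = γ ◁ δ⁻¹`, so that `c ≤ α` directly from the
formula for the slipface function of `c`. The optimal `ℓ` in `max_ℓ [s_γ(a,ℓ) - s_δ(b,ℓ)]` can be
chosen to decrease as `a` grows, which gives `Inv(c⁻¹) ⊆ Inv(γ⁻¹)` (`tri_weak`); this says that
the pair `(c, c⁻¹γ)` is reduced. For a reduced pair `(α, β)` one has `s_{αβ}(a,b) = s_α(a,ℓ) +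
s_β(ℓ,b)` for a suitable `ℓ` given `a, b` (`dem_of_reduced`, whence `α ⋆ β = αβ`) and also for a
suitable `a` given `ℓ, b` (`tri_le`, whence `c⁻¹γ ≤ δ`).

For several factors, let `δ` be the Demazure product of all factors but the first. It need not
lie in `G`, but `γ ◁ δ⁻¹` does: it equals the iterated `(γ ◁ α_ℓ⁻¹) ◁ ⋯ ◁ α₂⁻¹` (`tri_mem`).
Hence `β₁ = γ ◁ δ⁻¹`, and induction on the list applies to `β₁⁻¹γ ≤ δ`.
-/

/-! ### Slip functions -/

/-- Integer-valued functions that behave like the slipface function of an almost-sign-preserving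
permutation of shift `χ`: Monge, and eventually equal to `0` or `a - b + χ` in each variable.
No monotonicity or nonnegativity is required, since both follow. -/
structure Slip (s : ℤ → ℤ → ℤ) (χ : ℤ) : Prop where
  monge : ∀ a a' b b', a ≤ a' → b ≤ b' → s a b + s a' b' ≤ s a' b + s a b'
  top_b : ∀ a, ∃ B, ∀ b, B ≤ b → s a b = 0
  bot_b : ∀ a, ∃ B, ∀ b, b ≤ B → s a b = a - b + χ
  bot_a : ∀ b, ∃ A, ∀ a, a ≤ A → s a b = 0
  top_a : ∀ b, ∃ A, ∀ a, A ≤ a → s a b = a - b + χ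

namespace Slip

variable {s t f : ℤ → ℤ → ℤ} {χ ψ : ℤ}

/-- On slipface functions, this duality is the passage from `α` to `α⁻¹`. -/
lemma dual (h : Slip s χ) : Slip (fun b a => s a b - (a - b + χ)) (-χ) where
  monge b b' a a' hb ha := by
    have := h.monge a a' b b' ha hb
    linarith
  top_b b := by
    obtain ⟨A, hA⟩ := h.top_a b
    exact ⟨A, fun a ha => by simp [hA a ha]⟩
  bot_b b := by
    obtain ⟨A, hA⟩ := h.bot_a b
    exact ⟨A, fun a ha => by simp only [hA a ha]; ring⟩
  bot_a a := by
    obtain ⟨A, hA⟩ := h.bot_b a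
    exact ⟨A, fun b hb => by simp [hA b hb]⟩
  top_a a := by
    obtain ⟨A, hA⟩ := h.top_b a
    exact ⟨A, fun b hb => by simp only [hA b hb]; ring⟩

lemma anti_b (h : Slip s χ) (a : ℤ) {b b' : ℤ} (hb : b ≤ b') : s a b' ≤ s a b := by
  obtain ⟨A, hA⟩ := h.bot_a b
  obtain ⟨A', hA'⟩ := h.bot_a b'
  have := h.monge (min a (min A A')) a b b' (by omega) hb
  rw [hA (min a (min A A')) (by omega), hA' (min a (min A A')) (by omega)] at this
  linarith

lemma mono_a (h : Slip s χ) {a a' : ℤ} (b : ℤ) (ha : a ≤ a') : s a b ≤ s a' b := by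
  obtain ⟨B, hB⟩ := h.top_b a
  obtain ⟨B', hB'⟩ := h.top_b a'
  have := h.monge a a' b (max b (max B B')) ha (by omega)
  rw [hB (max b (max B B')) (by omega), hB' (max b (max B B')) (by omega)] at this
  linarith

lemma nonneg (h : Slip s χ) (a b : ℤ) : 0 ≤ s a b := by
  obtain ⟨B, hB⟩ := h.top_b a
  have := h.anti_b a (b := b) (b' := max b B) (by omega)
  rwa [hB _ (by omega)] at this

lemma lower (h : Slip s χ) (a b : ℤ) : a - b + χ ≤ s a b := by
  have := h.dual.nonneg b a
  linarith

lemma lip_b (h : Slip s χ) (a : ℤ) {b b' : ℤ} (hb : b ≤ b') : s a b ≤ s a b' + (b' - b) := by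
  have := h.dual.mono_a a hb
  linarith

lemma shift_unique (h : Slip s χ) (h' : Slip s ψ) : χ = ψ := by
  obtain ⟨B, hB⟩ := h.bot_b 0
  obtain ⟨B', hB'⟩ := h'.bot_b 0
  have h1 := hB (min B B') (by omega)
  have h2 := hB' (min B B') (by omega)
  omega

/-- The min-plus product of slip functions is a slip function. -/
lemma dem (hs : Slip s χ) (ht : Slip t ψ) (hle : ∀ a b l, f a b ≤ s a l + t l b)
    (hex : ∀ a b, ∃ l, f a b = s a l + t l b) : Slip f (χ + ψ) where
  monge a a' b b' ha hb := by
    obtain ⟨l, hl⟩ := hex a' b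
    obtain ⟨m, hm⟩ := hex a b'
    rcases le_total l m with h | h
    · linarith [hs.monge a a' l m ha h, hle a b l, hle a' b' m]
    · linarith [ht.monge m l b b' h hb, hle a b m, hle a' b' l]
  top_b a := by
    obtain ⟨L, hL⟩ := hs.top_b a
    obtain ⟨B, hB⟩ := ht.top_b L
    refine ⟨B, fun b hb => ?_⟩
    obtain ⟨l, hl⟩ := hex a b
    linarith [hle a b L, hL L le_rfl, hB b hb, hs.nonneg a l, ht.nonneg l b]
  bot_b a := by
    obtain ⟨L, hL⟩ := hs.bot_b a
    obtain ⟨B, hB⟩ := ht.bot_b L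
    refine ⟨B, fun b hb => ?_⟩
    obtain ⟨l, hl⟩ := hex a b
    linarith [hle a b L, hL L le_rfl, hB b hb, hs.lower a l, ht.lower l b]
  bot_a b := by
    obtain ⟨L, hL⟩ := ht.bot_a b
    obtain ⟨B, hB⟩ := hs.bot_a L
    refine ⟨B, fun a ha => ?_⟩
    obtain ⟨l, hl⟩ := hex a b
    linarith [hle a b L, hL L le_rfl, hB a ha, hs.nonneg a l, ht.nonneg l b]
  top_a b := by
    obtain ⟨L, hL⟩ := ht.top_a b
    obtain ⟨B, hB⟩ := hs.top_a L
    refine ⟨B, fun a ha => ?_⟩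
    obtain ⟨l, hl⟩ := hex a b
    linarith [hle a b L, hL L le_rfl, hB a ha, hs.lower a l, ht.lower l b]

lemma tri_zero_le (hs : Slip s χ) (ht : Slip t ψ) (hge : ∀ a b l, s a l - t b l ≤ f a b)
    (a b : ℤ) : 0 ≤ f a b := by
  obtain ⟨B, hB⟩ := hs.top_b a
  obtain ⟨B', hB'⟩ := ht.top_b b
  have := hge a b (max B B')
  rw [hB _ (by omega), hB' _ (by omega)] at this
  linarith

lemma tri_diag_le (hs : Slip s χ) (ht : Slip t ψ) (hge : ∀ a b l, s a l - t b l ≤ f a b)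
    (a b : ℤ) : a - b + (χ - ψ) ≤ f a b := by
  obtain ⟨B, hB⟩ := hs.bot_b a
  obtain ⟨B', hB'⟩ := ht.bot_b b
  have := hge a b (min B B')
  rw [hB _ (by omega), hB' _ (by omega)] at this
  linarith

/-- The residual `max_ℓ [s(a,ℓ) - t(b,ℓ)]` of slip functions is a slip function. -/
lemma tri (hs : Slip s χ) (ht : Slip t ψ) (hge : ∀ a b l, s a l - t b l ≤ f a b)
    (hex : ∀ a b, ∃ l, f a b = s a l - t b l) : Slip f (χ - ψ) where
  monge a a' b b' ha hb := by
    obtain ⟨l, hl⟩ := hex a b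
    obtain ⟨m, hm⟩ := hex a' b'
    rcases le_total l m with h | h
    · linarith [hs.monge a a' l m ha h, hge a' b l, hge a b' m]
    · linarith [ht.monge b b' m l hb h, hge a' b m, hge a b' l]
  top_b a := by
    obtain ⟨N, hN⟩ := hs.top_b a
    refine ⟨N - ψ, fun b hb => le_antisymm ?_ (tri_zero_le hs ht hge a b)⟩
    obtain ⟨l, hl⟩ := hex a b
    rcases le_total l N with h | h
    · linarith [hs.lip_b a h, hN N le_rfl, ht.lower b l]
    · linarith [hN l h, ht.nonneg b l]
  bot_b a := by
    obtain ⟨N, hN⟩ := hs.bot_b a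
    refine ⟨N - ψ, fun b hb => le_antisymm ?_ (tri_diag_le hs ht hge a b)⟩
    obtain ⟨l, hl⟩ := hex a b
    rcases le_total l N with h | h
    · linarith [hN l h, ht.lower b l]
    · linarith [hs.anti_b a h, hN N le_rfl, ht.nonneg b l]
  bot_a b := by
    obtain ⟨N, hN⟩ := ht.bot_b b
    obtain ⟨A, hA⟩ := hs.bot_a N
    refine ⟨A, fun a ha => le_antisymm ?_ (tri_zero_le hs ht hge a b)⟩
    obtain ⟨l, hl⟩ := hex a b
    rcases le_total l N with h | h
    · linarith [hs.lip_b a h, hA a ha, hN l h, hN N le_rfl, ht.nonneg b N]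
    · linarith [hs.anti_b a h, hA a ha, ht.nonneg b l]
  top_a b := by
    obtain ⟨N, hN⟩ := ht.top_b b
    obtain ⟨A, hA⟩ := hs.top_a N
    refine ⟨A, fun a ha => le_antisymm ?_ (tri_diag_le hs ht hge a b)⟩
    obtain ⟨l, hl⟩ := hex a b
    rcases le_total l N with h | h
    · linarith [hs.lip_b a h, hA a ha, ht.lower b l]
    · linarith [hs.anti_b a h, hA a ha, ht.nonneg b l, hN N le_rfl, ht.lower b N]

lemma exists_min (hs : Slip s χ) (ht : Slip t ψ) (a b : ℤ) :
    ∃ x, (∀ l, x ≤ s a l + t l b) ∧ ∃ l, x = s a l + t l b := by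
  obtain ⟨x, hx, hmin⟩ := Int.exists_least_of_bdd (P := fun x => ∃ l, x = s a l + t l b)
    ⟨0, by rintro z ⟨l, rfl⟩; linarith [hs.nonneg a l, ht.nonneg l b]⟩ ⟨_, 0, rfl⟩
  exact ⟨x, fun l => hmin _ ⟨l, rfl⟩, hx⟩

lemma exists_max (hs : Slip s χ) (ht : Slip t ψ) (a b : ℤ) :
    ∃ x, (∀ l, s a l - t b l ≤ x) ∧ ∃ l, x = s a l - t b l := by
  obtain ⟨N, hN⟩ := hs.bot_b a
  obtain ⟨x, hx, hmax⟩ := Int.exists_greatest_of_bdd (P := fun x => ∃ l, x = s a l - t b l)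
    ⟨max (a - b + χ - ψ) (s a N), by
      rintro z ⟨l, rfl⟩
      rcases le_total l N with h | h
      · exact le_max_of_le_left (by linarith [hN l h, ht.lower b l])
      · exact le_max_of_le_right (by linarith [hs.anti_b a h, ht.nonneg b l])⟩ ⟨_, 0, rfl⟩
  exact ⟨x, fun l => hmax _ ⟨l, rfl⟩, hx⟩

/-- The difference of consecutive columns of a slip function is a unit step; the place where
the step occurs is the value at `b` of the permutation to be reconstructed. -/
lemma exists_step (h : Slip s χ) (b : ℤ) :
    ∃ g : ℤ, ∀ a, s a b - s a (b + 1) = if g < a then 1 else 0 := by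
  obtain ⟨A₀, hA₀⟩ := h.bot_a b
  obtain ⟨A₁, hA₁⟩ := h.bot_a (b + 1)
  obtain ⟨C₀, hC₀⟩ := h.top_a b
  obtain ⟨C₁, hC₁⟩ := h.top_a (b + 1)
  have h0 : ∀ a, a ≤ min A₀ A₁ → s a b - s a (b + 1) = 0 := fun a ha => by
    rw [hA₀ a (by omega), hA₁ a (by omega)]; ring
  have hm : ∀ a a', a ≤ a' → s a b - s a (b + 1) ≤ s a' b - s a' (b + 1) := fun a a' ha => by
    linarith [h.monge a a' b (b + 1) ha (by omega)]
  obtain ⟨g, hg, hmax⟩ := Int.exists_greatest_of_bdd (P := fun a => s a b - s a (b + 1) ≤ 0)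
    ⟨max C₀ C₁, fun a ha => by
      by_contra hlt
      rw [hC₀ a (by omega), hC₁ a (by omega)] at ha
      omega⟩ ⟨min A₀ A₁, (h0 _ le_rfl).le⟩
  refine ⟨g, fun a => ?_⟩
  split_ifs with hlt
  · have h1 : ¬ s a b - s a (b + 1) ≤ 0 := fun hh => absurd (hmax a hh) (by omega)
    linarith [h.lip_b a (b := b) (b' := b + 1) (by omega)]
  · linarith [hm a g (by omega), h.anti_b a (b := b) (b' := b + 1) (by omega)]

end Slip

/-! ### Slipface functions of permutations -/

lemma asp_iff {α : Equiv.Perm ℤ} :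
    ASP α ↔ {n : ℤ | (n < 0 ∧ 0 ≤ α n) ∨ (α n < 0 ∧ 0 ≤ n)}.Finite := by
  have : {n : ℤ | (n < 0 ∧ 0 ≤ α n) ∨ (α n < 0 ∧ 0 ≤ n)} =
      {n : ℤ | (n < 0 ∧ ¬ α n < 0) ∨ (α n < 0 ∧ ¬ n < 0)} := by
    simp only [not_lt]
  rw [this]
  exact Iff.rfl

lemma ASP.inv {α : Equiv.Perm ℤ} (h : ASP α) : ASP α⁻¹ := by
  rw [asp_iff] at h ⊢
  refine (Set.Finite.image α h).subset fun n hn => ⟨α⁻¹ n, ?_, by simp⟩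
  have h1 : α (α⁻¹ n) = n := by simp
  simp only [Set.mem_ofPred_eq] at hn ⊢
  omega

lemma ASP.finite {α : Equiv.Perm ℤ} (h : ASP α) (a b : ℤ) : {n : ℤ | b ≤ n ∧ α n < a}.Finite := by
  rw [asp_iff] at h
  refine ((h.union (Set.finite_Icc b 0)).union
    ((Set.finite_Icc 0 a).preimage (α.injective.injOn))).subset ?_
  rintro n ⟨h1, h2⟩
  simp only [Set.mem_union, Set.mem_ofPred_eq, Set.mem_Icc, Set.mem_preimage]
  omega

lemma sF_step_b {α : Equiv.Perm ℤ} (h : ASP α) (a b : ℤ) :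
    (sF α a b : ℤ) - sF α a (b + 1) = if α b < a then 1 else 0 := by
  unfold sF
  split_ifs with hlt
  · have : {n : ℤ | b ≤ n ∧ α n < a} = insert b {n : ℤ | b + 1 ≤ n ∧ α n < a} := by
      ext n
      simp only [Set.mem_ofPred_eq, Set.mem_insert_iff]
      constructor
      · rintro ⟨h1, h2⟩
        by_cases hn : n = b
        · exact Or.inl hn
        · exact Or.inr ⟨by omega, h2⟩
      · rintro (rfl | ⟨h1, h2⟩)
        · exact ⟨le_rfl, hlt⟩
        · exact ⟨by omega, h2⟩
    rw [this, Set.ncard_insert_of_notMem (by simp) (h.finite a (b + 1))]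
    push_cast; ring
  · have : {n : ℤ | b ≤ n ∧ α n < a} = {n : ℤ | b + 1 ≤ n ∧ α n < a} := by
      ext n
      simp only [Set.mem_ofPred_eq]
      constructor
      · rintro ⟨h1, h2⟩
        refine ⟨?_, h2⟩
        rcases h1.eq_or_lt with rfl | h1
        · exact absurd h2 hlt
        · omega
      · rintro ⟨h1, h2⟩
        exact ⟨by omega, h2⟩
    rw [this]; ring

lemma sF_step_a {α : Equiv.Perm ℤ} (h : ASP α) (a b : ℤ) :
    (sF α (a + 1) b : ℤ) - sF α a b = if b ≤ α⁻¹ a then 1 else 0 := by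
  unfold sF
  split_ifs with hlt
  · have : {n : ℤ | b ≤ n ∧ α n < a + 1} = insert (α⁻¹ a) {n : ℤ | b ≤ n ∧ α n < a} := by
      ext n
      simp only [Set.mem_ofPred_eq, Set.mem_insert_iff, Equiv.Perm.eq_inv_iff_eq]
      constructor
      · rintro ⟨h1, h2⟩
        by_cases hn : α n = a
        · exact Or.inl hn
        · exact Or.inr ⟨h1, by omega⟩
      · rintro (rfl | ⟨h1, h2⟩)
        · exact ⟨by simpa using hlt, by omega⟩
        · exact ⟨h1, by omega⟩
    rw [this, Set.ncard_insert_of_notMem (by simp) (h.finite a b)]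
    push_cast; ring
  · have : {n : ℤ | b ≤ n ∧ α n < a + 1} = {n : ℤ | b ≤ n ∧ α n < a} := by
      ext n
      simp only [Set.mem_ofPred_eq]
      constructor
      · rintro ⟨h1, h2⟩
        refine ⟨h1, ?_⟩
        rcases (Int.lt_add_one_iff.mp h2).eq_or_lt with rfl | h2
        · simp at hlt; omega
        · exact h2
      · rintro ⟨h1, h2⟩
        exact ⟨h1, by omega⟩
    rw [this]; ring

lemma const_of_step {f : ℤ → ℤ} (h : ∀ n, f (n + 1) = f n) (n m : ℤ) : f n = f m := by
  have : ∀ n, f n = f 0 := fun n => by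
    induction n using Int.induction_on with
    | zero => rfl
    | succ i ih => rw [h, ih]
    | pred i ih => rw [← ih, ← h (-(i : ℤ) - 1)]; simp
  rw [this n, this m]

lemma sF_inv {α : Equiv.Perm ℤ} (h : ASP α) (a b : ℤ) :
    (sF α a b : ℤ) = sF α⁻¹ b a + (a - b + shiftASP α) := by
  have h1 := const_of_step (f := fun a => (sF α a b : ℤ) - sF α⁻¹ b a - a) (fun n => by
    have h1 := sF_step_a h n b
    have h2 := sF_step_b h.inv b n
    split_ifs at h1 h2 <;> omega) a 0
  have h2 := const_of_step (f := fun b => (sF α 0 b : ℤ) - sF α⁻¹ b 0 + b) (fun n => by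
    have h1 := sF_step_b h 0 n
    have h2 := sF_step_a h.inv n 0
    rw [inv_inv] at h2
    split_ifs at h1 h2 <;> omega) b 0
  unfold shiftASP
  omega

lemma sF_top_b {α : Equiv.Perm ℤ} (h : ASP α) (a : ℤ) :
    ∃ B, ∀ b, B ≤ b → (sF α a b : ℤ) = 0 := by
  obtain ⟨B, hB⟩ := (h.finite a 0).bddAbove
  refine ⟨max 0 (B + 1), fun b hb => ?_⟩
  have : {n : ℤ | b ≤ n ∧ α n < a} = ∅ := by
    ext n
    simp only [Set.mem_ofPred_eq, Set.mem_empty_iff_false, iff_false]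
    rintro ⟨h1, h2⟩
    have := hB (show n ∈ {n : ℤ | 0 ≤ n ∧ α n < a} from ⟨by omega, h2⟩)
    omega
  simp [sF, this]

lemma sF_bot_a {α : Equiv.Perm ℤ} (h : ASP α) (b : ℤ) :
    ∃ A, ∀ a, a ≤ A → (sF α a b : ℤ) = 0 := by
  obtain ⟨B, hB⟩ := ((h.finite 0 b).image α).bddBelow
  refine ⟨min 0 B, fun a ha => ?_⟩
  have : {n : ℤ | b ≤ n ∧ α n < a} = ∅ := by
    ext n
    simp only [Set.mem_ofPred_eq, Set.mem_empty_iff_false, iff_false]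
    rintro ⟨h1, h2⟩
    have := hB (Set.mem_image_of_mem α (show n ∈ {n : ℤ | b ≤ n ∧ α n < 0} from ⟨h1, by omega⟩))
    omega
  simp [sF, this]

lemma slip_sF {α : Equiv.Perm ℤ} (h : ASP α) : Slip (fun a b => (sF α a b : ℤ)) (shiftASP α) where
  monge a a' b b' ha hb := by
    induction b', hb using Int.leInduction with
    | base => linarith
    | succ n hn ih =>
      have h1 := sF_step_b h a n
      have h2 := sF_step_b h a' n
      split_ifs at h1 h2 <;> omega
  top_b := sF_top_b h
  bot_b a := by
    obtain ⟨B, hB⟩ := sF_bot_a h.inv a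
    exact ⟨B, fun b hb => by rw [sF_inv h, hB b hb, zero_add]⟩
  bot_a := sF_bot_a h
  top_a b := by
    obtain ⟨A, hA⟩ := sF_top_b h.inv b
    exact ⟨A, fun a ha => by rw [sF_inv h, hA a ha, zero_add]⟩

/-- Every slip function is the slipface function of an almost-sign-preserving permutation. -/
lemma Slip.exists_perm {s : ℤ → ℤ → ℤ} {χ : ℤ} (h : Slip s χ) :
    ∃ γ : Equiv.Perm ℤ, ASP γ ∧ ∀ a b, (sF γ a b : ℤ) = s a b := by
  choose g hg using h.exists_step
  choose k hk using h.dual.exists_step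
  have hgk : ∀ a, g (k a) = a := fun a => by
    have h1 := hk a (k a)
    have h2 := hk a (k a + 1)
    have h3 := hg (k a) a
    have h4 := hg (k a) (a + 1)
    split_ifs at h1 h2 h3 h4 <;> omega
  have hkg : ∀ b, k (g b) = b := fun b => by
    have h1 := hg b (g b)
    have h2 := hg b (g b + 1)
    have h3 := hk (g b) b
    have h4 := hk (g b) (b + 1)
    split_ifs at h1 h2 h3 h4 <;> omega
  let γ : Equiv.Perm ℤ := ⟨g, k, hkg, hgk⟩
  have hγ : ∀ b, γ b = g b := fun b => rfl
  have hasp : ASP γ := by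
    obtain ⟨B, hB⟩ := h.top_b 0
    obtain ⟨C, hC⟩ := h.bot_b 0
    rw [asp_iff]
    refine (Set.finite_Icc (min 0 C - 1) (max 0 B)).subset fun n hn => ?_
    simp only [Set.mem_ofPred_eq, hγ] at hn
    rw [Set.mem_Icc]
    have h1 := hg n 0
    by_contra hcon
    have : n < min 0 C - 1 ∨ max 0 B < n := by omega
    rcases this with h2 | h2
    · rw [hC n (by omega), hC (n + 1) (by omega), if_neg (by omega)] at h1
      omega
    · rw [hB n (by omega), hB (n + 1) (by omega), if_pos (by omega)] at h1
      omega
  refine ⟨γ, hasp, fun a b => ?_⟩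
  obtain ⟨B, hB⟩ := h.top_b a
  obtain ⟨C, hC⟩ := sF_top_b hasp a
  have h1 := const_of_step (f := fun b => (sF γ a b : ℤ) - s a b) (fun n => by
    have h1 := hg n a
    have h2 := sF_step_b hasp a n
    rw [hγ] at h2
    omega) b (max B C)
  rw [hB (max B C) (by omega), hC (max B C) (by omega)] at h1
  omega

lemma sF_injective {α β : Equiv.Perm ℤ} (hα : ASP α) (hβ : ASP β)
    (h : ∀ a b, sF α a b = sF β a b) : α = β := by
  ext b
  have h1 := fun a => sF_step_b hα a b
  have h2 := fun a => sF_step_b hβ a b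
  simp only [h] at h1
  have h3 := h1 (α b)
  have h4 := h1 (β b)
  rw [h2] at h3 h4
  split_ifs at h3 h4 <;> omega

/-! ### Demazure products and residuals -/

lemma isDem_iff {α β γ : Equiv.Perm ℤ} : IsDem α β γ ↔
    (∀ a b l, (sF γ a b : ℤ) ≤ sF α a l + sF β l b) ∧
      ∀ a b, ∃ l, (sF γ a b : ℤ) = sF α a l + sF β l b := by
  constructor
  · intro h
    refine ⟨fun a b l => by exact_mod_cast (h a b).2 ⟨l, rfl⟩, fun a b => ?_⟩
    obtain ⟨l, hl⟩ := (h a b).1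
    exact ⟨l, by exact_mod_cast hl⟩
  · rintro ⟨h1, h2⟩ a b
    refine ⟨?_, ?_⟩
    · obtain ⟨l, hl⟩ := h2 a b
      exact ⟨l, by exact_mod_cast hl⟩
    · rintro x ⟨l, rfl⟩
      exact_mod_cast h1 a b l

lemma isTri_iff {γ δ c : Equiv.Perm ℤ} : IsTriL γ δ⁻¹ c ↔
    (∀ a b l, (sF γ a l : ℤ) - sF δ b l ≤ sF c a b) ∧
      ∀ a b, ∃ l, (sF c a b : ℤ) = sF γ a l - sF δ b l := by
  simp only [IsTriL, inv_inv]
  constructor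
  · intro h
    exact ⟨fun a b l => (h a b).2 ⟨l, rfl⟩, fun a b => (h a b).1⟩
  · rintro ⟨h1, h2⟩ a b
    refine ⟨h2 a b, ?_⟩
    rintro x ⟨l, rfl⟩
    exact h1 a b l

lemma shift_dem {α β γ : Equiv.Perm ℤ} (hα : ASP α) (hβ : ASP β) (hγ : ASP γ)
    (h : IsDem α β γ) : shiftASP γ = shiftASP α + shiftASP β := by
  rw [isDem_iff] at h
  exact (slip_sF hγ).shift_unique ((slip_sF hα).dem (slip_sF hβ) h.1 h.2)

lemma shift_tri {γ δ c : Equiv.Perm ℤ} (hγ : ASP γ) (hδ : ASP δ) (hc : ASP c)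
    (h : IsTriL γ δ⁻¹ c) : shiftASP c = shiftASP γ - shiftASP δ := by
  rw [isTri_iff] at h
  exact (slip_sF hc).shift_unique ((slip_sF hγ).tri (slip_sF hδ) h.1 h.2)

lemma exists_dem {α β : Equiv.Perm ℤ} (hα : ASP α) (hβ : ASP β) :
    ∃ γ, ASP γ ∧ IsDem α β γ := by
  choose f hf1 hf2 using (slip_sF hα).exists_min (slip_sF hβ)
  obtain ⟨γ, hγ, h⟩ := ((slip_sF hα).dem (slip_sF hβ) hf1 hf2).exists_perm
  refine ⟨γ, hγ, isDem_iff.mpr ?_⟩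
  simp only [h]
  exact ⟨hf1, hf2⟩

lemma exists_tri {γ δ : Equiv.Perm ℤ} (hγ : ASP γ) (hδ : ASP δ) :
    ∃ c, ASP c ∧ IsTriL γ δ⁻¹ c := by
  choose f hf1 hf2 using (slip_sF hγ).exists_max (slip_sF hδ)
  obtain ⟨c, hc, h⟩ := ((slip_sF hγ).tri (slip_sF hδ) hf1 hf2).exists_perm
  refine ⟨c, hc, isTri_iff.mpr ?_⟩
  simp only [h]
  exact ⟨hf1, hf2⟩

/-! ### Reduced pairs and the reduction for two factors -/

lemma sF_preimage (α β : Equiv.Perm ℤ) (a l : ℤ) :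
    {n : ℤ | l ≤ β n ∧ α (β n) < a}.ncard = sF α a l := by
  have : {m : ℤ | l ≤ m ∧ α m < a} = β '' {n : ℤ | l ≤ β n ∧ α (β n) < a} := by
    ext m
    constructor
    · intro hm
      exact ⟨β⁻¹ m, by simpa using hm, by simp⟩
    · rintro ⟨n, hn, rfl⟩
      exact hn
  rw [sF, this, Set.ncard_image_of_injective _ β.injective]

lemma finite_preimage {α : Equiv.Perm ℤ} (hα : ASP α) (β : Equiv.Perm ℤ) (a l : ℤ) :
    {n : ℤ | l ≤ β n ∧ α (β n) < a}.Finite :=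
  (hα.finite a l).preimage β.injective.injOn

lemma sF_mul_le {α β : Equiv.Perm ℤ} (hα : ASP α) (hβ : ASP β) (a b l : ℤ) :
    sF (α * β) a b ≤ sF α a l + sF β l b := by
  rw [← sF_preimage α β a l, add_comm]
  refine le_trans (Set.ncard_le_ncard ?_ ((hβ.finite l b).union (finite_preimage hα β a l)))
    (Set.ncard_union_le _ _)
  rintro n ⟨h1, h2⟩
  rcases lt_or_ge (β n) l with h | h
  · exact Or.inl ⟨h1, h⟩
  · exact Or.inr ⟨h, h2⟩

/-- Equality in `sF_mul_le` when none of the points counted on the right is lost on the left. -/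
lemma sF_mul_eq {α β : Equiv.Perm ℤ} (hα : ASP α) (hβ : ASP β) (hαβ : ASP (α * β)) (a b l : ℤ)
    (h1 : ∀ m, β⁻¹ m < b → α m < a → m < l) (h2 : ∀ m, b ≤ β⁻¹ m → a ≤ α m → l ≤ m) :
    sF (α * β) a b = sF α a l + sF β l b := by
  refine le_antisymm (sF_mul_le hα hβ a b l) ?_
  rw [← sF_preimage α β a l, add_comm, sF, ← Set.ncard_union_eq ?_ (hβ.finite l b)
    (finite_preimage hα β a l)]
  · refine Set.ncard_le_ncard ?_ (hαβ.finite a b)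
    rintro n (⟨h, h'⟩ | ⟨h, h'⟩)
    · refine ⟨h, ?_⟩
      by_contra hcon
      have := h2 (β n) (by simpa using h) (by simpa using hcon)
      omega
    · refine ⟨?_, h'⟩
      by_contra hcon
      have := h1 (β n) (by simpa using hcon) h'
      omega
  · rw [Set.disjoint_left]
    rintro n ⟨_, h⟩ ⟨h', _⟩
    omega

/-- A bounded-above set lying below a bounded-below set is separated from it by an integer. -/
lemma exists_separating {P Q : ℤ → Prop} (hP : ∃ B, ∀ m, P m → m ≤ B) (hQ : ∃ B, ∀ m, Q m → B ≤ m)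
    (hPQ : ∀ u v, P u → Q v → u < v) : ∃ l, (∀ m, P m → m < l) ∧ ∀ m, Q m → l ≤ m := by
  by_cases hne : ∃ m, P m
  · obtain ⟨g, hg, hmax⟩ := Int.exists_greatest_of_bdd hP hne
    exact ⟨g + 1, fun m hm => by have := hmax m hm; omega, fun m hm => hPQ g m hg hm⟩
  · obtain ⟨B, hB⟩ := hQ
    exact ⟨B, fun m hm => absurd ⟨m, hm⟩ hne, hB⟩

lemma ASP.bdd_le {α : Equiv.Perm ℤ} (h : ASP α) (a : ℤ) : ∃ B, ∀ m, α m < a → m ≤ B := by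
  obtain ⟨B, hB⟩ := (h.finite a 0).bddAbove
  refine ⟨max 0 B, fun m hm => ?_⟩
  by_contra hcon
  have := hB (show m ∈ {n : ℤ | 0 ≤ n ∧ α n < a} from ⟨by omega, hm⟩)
  omega

lemma ASP.bdd_ge {α : Equiv.Perm ℤ} (h : ASP α) (a : ℤ) : ∃ B, ∀ m, a ≤ α m → B ≤ m := by
  obtain ⟨B, hB⟩ := ((h.inv.finite 0 a).image (α⁻¹ : Equiv.Perm ℤ)).bddBelow
  refine ⟨min 0 B, fun m hm => ?_⟩
  by_contra hcon
  have : m ∈ (α⁻¹ : Equiv.Perm ℤ) '' {n : ℤ | a ≤ n ∧ α⁻¹ n < 0} := ⟨α m, ⟨hm, by simp; omega⟩, by simp⟩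
  have := hB this
  omega

lemma reduced_iff {α β : Equiv.Perm ℤ} : InvSet α ∩ InvSet β⁻¹ = ∅ ↔
    ∀ u v, u < v → α v < α u → ¬ β⁻¹ v < β⁻¹ u := by
  rw [Set.eq_empty_iff_forall_notMem]
  constructor
  · intro h u v huv h1 h2
    exact h (u, v) ⟨⟨huv, h1⟩, ⟨huv, h2⟩⟩
  · rintro h ⟨u, v⟩ ⟨⟨huv, h1⟩, ⟨_, h2⟩⟩
    exact h u v huv h1 h2

/-- The Demazure product of a reduced pair is its composition. -/
lemma dem_of_reduced {α β : Equiv.Perm ℤ} (hα : ASP α) (hβ : ASP β) (hαβ : ASP (α * β))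
    (hred : InvSet α ∩ InvSet β⁻¹ = ∅) : IsDem α β (α * β) := by
  rw [reduced_iff] at hred
  refine isDem_iff.mpr ⟨fun a b l => by exact_mod_cast sF_mul_le hα hβ a b l, fun a b => ?_⟩
  obtain ⟨B, hB⟩ := hα.bdd_le a
  obtain ⟨C, hC⟩ := hα.bdd_ge a
  obtain ⟨l, h1, h2⟩ := exists_separating (P := fun m => β⁻¹ m < b ∧ α m < a)
    (Q := fun m => b ≤ β⁻¹ m ∧ a ≤ α m) ⟨B, fun m hm => hB m hm.2⟩ ⟨C, fun m hm => hC m hm.2⟩ (by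
      rintro u v ⟨h1, h2⟩ ⟨h3, h4⟩
      rcases lt_trichotomy u v with h | rfl | h
      · exact h
      · omega
      · exact absurd (h1.trans_le h3) (hred v u h (by omega)))
  exact ⟨l, by
    exact_mod_cast sF_mul_eq hα hβ hαβ a b l (fun m hm₁ hm₂ => h1 m ⟨hm₁, hm₂⟩)
      fun m hm₁ hm₂ => h2 m ⟨hm₁, hm₂⟩⟩

/-- `γ ◁ δ⁻¹` lies below `γ` in weak order: every non-inversion of `γ⁻¹` is a non-inversion of
its inverse. -/
lemma tri_weak {γ δ c : Equiv.Perm ℤ} (hγ : ASP γ) (hc : ASP c) (h : IsTriL γ δ⁻¹ c)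
    {q p : ℤ} (hqp : q < p) (hinv : γ⁻¹ q < γ⁻¹ p) : c⁻¹ q < c⁻¹ p := by
  obtain ⟨hge, hex⟩ := isTri_iff.mp h
  set b := c⁻¹ q with hb
  have h1 := sF_step_a hc q b
  rw [if_pos hb.le] at h1
  -- An optimal index for `(q + 1, b)` is at most `γ⁻¹ q`, as otherwise it would give the same
  -- value at `(q, b)`.
  obtain ⟨l, hl⟩ := hex (q + 1) b
  have hlq : l ≤ γ⁻¹ q := by
    by_contra hcon
    have h2 := sF_step_a hγ q l
    rw [if_neg hcon] at h2
    linarith [hge q b l]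
  -- By the Monge inequality, some index at most `γ⁻¹ q` is still optimal for `(p, b)`.
  have key : ∃ m, m ≤ γ⁻¹ q ∧ (sF c p b : ℤ) = sF γ p m - sF δ b m := by
    obtain ⟨m, hm⟩ := hex p b
    by_cases hmq : m ≤ γ⁻¹ q
    · exact ⟨m, hmq, hm⟩
    · refine ⟨l, hlq, le_antisymm ?_ (hge p b l)⟩
      have h2 := (slip_sF hγ).monge (q + 1) p l m (by omega) (by omega)
      linarith [hge (q + 1) b m]
  obtain ⟨m, hmq, hm⟩ := key
  have h2 := sF_step_a hγ p m
  rw [if_pos (by omega)] at h2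
  have h3 := sF_step_a hc p b
  have h4 := hge (p + 1) b m
  have h5 : b ≤ c⁻¹ p := by
    by_contra hcon
    rw [if_neg hcon] at h3
    omega
  refine lt_of_le_of_ne h5 fun heq => ?_
  have := c⁻¹.injective (hb.symm.trans heq)
  omega

lemma tri_reduced {γ δ c : Equiv.Perm ℤ} (hγ : ASP γ) (hc : ASP c) (h : IsTriL γ δ⁻¹ c) :
    InvSet c ∩ InvSet (c⁻¹ * γ)⁻¹ = ∅ := by
  rw [reduced_iff]
  intro u v huv h1 h2
  have := tri_weak hγ hc h h1 (by simpa using h2)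
  rw [show c⁻¹ (c u) = u by simp, show c⁻¹ (c v) = v by simp] at this
  omega

lemma tri_le {γ δ c : Equiv.Perm ℤ} (hγ : ASP γ) (hc : ASP c) (hcγ : ASP (c⁻¹ * γ))
    (h : IsTriL γ δ⁻¹ c) : BruhatLE (c⁻¹ * γ) δ := by
  intro x y
  have hred := reduced_iff.mp (tri_reduced hγ hc h)
  set β := c⁻¹ * γ with hβ
  have hmul : c * β = γ := by simp [hβ]
  -- It suffices to find `a` with `s_γ(a,y) = s_c(a,x) + s_β(x,y)`: such an `a` separates the
  -- values of `c` on two finite sets of points.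
  obtain ⟨B, hB⟩ := (((hcγ.inv.finite y x)).image c).bddBelow
  obtain ⟨C, hC⟩ := ((hcγ.finite x y).image (fun n => c (β n))).bddAbove
  obtain ⟨a, h1, h2⟩ := exists_separating (P := fun k => c⁻¹ k < x ∧ y ≤ β⁻¹ (c⁻¹ k))
    (Q := fun k => x ≤ c⁻¹ k ∧ β⁻¹ (c⁻¹ k) < y)
    ⟨C, fun k hk => hC ⟨β⁻¹ (c⁻¹ k), ⟨hk.2, by simpa using hk.1⟩, by simp⟩⟩
    ⟨B, fun k hk => hB ⟨c⁻¹ k, ⟨hk.1, hk.2⟩, by simp⟩⟩ (by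
      rintro u v ⟨h1, h2⟩ ⟨h3, h4⟩
      rcases lt_trichotomy u v with h | rfl | h
      · exact h
      · omega
      · exact absurd (h4.trans_le h2) (hred (c⁻¹ u) (c⁻¹ v) (by omega) (by simpa using h)))
  have heq := sF_mul_eq hc hcγ (by rw [hmul]; exact hγ) a y x
    (fun m h h' => by
      by_contra hcon
      have := h2 (c m) ⟨by simpa using hcon, by simpa using h⟩
      omega)
    (fun m h h' => by
      by_contra hcon
      have := h1 (c m) ⟨by simpa using hcon, by simpa using h⟩
      omega)
  rw [hmul] at heq
  have := (isTri_iff.mp h).1 a x y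
  omega

/-! ### Several factors -/

lemma asp_one : ASP 1 := by
  rw [asp_iff]
  convert Set.finite_empty (α := ℤ)
  ext n
  simp only [Equiv.Perm.coe_one, id_eq, Set.mem_ofPred_eq, Set.mem_empty_iff_false, iff_false]
  omega

lemma exists_demList (L : List (Equiv.Perm ℤ)) (hL : ∀ a ∈ L, ASP a) :
    ∃ δ, ASP δ ∧ IsDemList L δ := by
  induction L with
  | nil => exact ⟨1, asp_one, rfl⟩
  | cons α L ih =>
    obtain ⟨δ, hδ, hd⟩ := ih fun a ha => hL a (List.mem_cons_of_mem _ ha)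
    obtain ⟨ε, hε, he⟩ := exists_dem (hL α List.mem_cons_self) hδ
    exact ⟨ε, hε, δ, hδ, hd, he⟩

lemma shift_one : shiftASP 1 = 0 := by simp [shiftASP]

lemma shift_demList (L : List (Equiv.Perm ℤ)) (hL : ∀ a ∈ L, ASP a) (δ : Equiv.Perm ℤ)
    (hδ : ASP δ) (h : IsDemList L δ) : shiftASP δ = (L.map shiftASP).sum := by
  induction L generalizing δ with
  | nil =>
    rw [show δ = 1 from h]
    simp [shift_one]
  | cons α L ih =>
    obtain ⟨ε, hε, he, hd⟩ := h
    rw [shift_dem (hL α List.mem_cons_self) hε hδ hd,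
      ih (fun a ha => hL a (List.mem_cons_of_mem _ ha)) ε hε he]
    simp

/-- If `δ` is an iterated Demazure product of elements of `G`, then `γ ◁ δ⁻¹ ∈ G` for `γ ∈ G`,
even though `δ` itself need not be in `G`: with `δ = α ⋆ ε`, one has
`γ ◁ δ⁻¹ = (γ ◁ ε⁻¹) ◁ α⁻¹`. -/
lemma tri_mem (G : Subgroup (Equiv.Perm ℤ)) (hG : ∀ g ∈ G, ASP g)
    (hGtri : ∀ a ∈ G, ∀ b ∈ G, ∀ c : Equiv.Perm ℤ, ASP c → IsTriL a b c → c ∈ G)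
    (L : List (Equiv.Perm ℤ)) (hL : ∀ a ∈ L, a ∈ G) (γ : Equiv.Perm ℤ) (hγ : γ ∈ G)
    (δ : Equiv.Perm ℤ) (hδ : IsDemList L δ) (c : Equiv.Perm ℤ) (hc : ASP c)
    (h : IsTriL γ δ⁻¹ c) : c ∈ G := by
  induction L generalizing δ c with
  | nil =>
    rw [show δ = 1 from hδ] at h
    exact hGtri γ hγ 1⁻¹ (G.inv_mem G.one_mem) c hc h
  | cons α L ih =>
    obtain ⟨ε, hε, he, hd⟩ := hδ
    have hα : α ∈ G := hL α List.mem_cons_self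
    obtain ⟨c₁, hc₁, h₁⟩ := exists_tri (hG γ hγ) hε
    have hc₁G := ih (fun a ha => hL a (List.mem_cons_of_mem _ ha)) ε he c₁ hc₁ h₁
    obtain ⟨c₂, hc₂, h₂⟩ := exists_tri hc₁ (hG α hα)
    have hc₂G := hGtri c₁ hc₁G α⁻¹ (G.inv_mem hα) c₂ hc₂ h₂
    obtain ⟨h, h'⟩ := isTri_iff.mp h
    obtain ⟨h₁, h₁'⟩ := isTri_iff.mp h₁
    obtain ⟨h₂, h₂'⟩ := isTri_iff.mp h₂
    obtain ⟨hd, hd'⟩ := isDem_iff.mp hd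
    rw [sF_injective hc hc₂ fun a b => ?_]
    · exact hc₂G
    · apply le_antisymm
      · obtain ⟨k, hk⟩ := h' a b
        obtain ⟨l, hl⟩ := hd' b k
        have := h₁ a l k
        have := h₂ a b l
        omega
      · obtain ⟨l, hl⟩ := h₂' a b
        obtain ⟨k, hk⟩ := h₁' a l
        have := h a b k
        have := hd b k l
        omega

lemma eq_one_of_le {γ : Equiv.Perm ℤ} (hγ : ASP γ) (hχ : shiftASP γ = 0) (h : BruhatLE γ 1) :
    γ = 1 := by
  refine sF_injective hγ asp_one fun a b => le_antisymm (h a b) ?_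
  have h0 := (slip_sF hγ).nonneg a b
  have h1 := (slip_sF hγ).lower a b
  have h2 : (sF 1 a b : ℤ) = max 0 (a - b) := by
    have : {n : ℤ | b ≤ n ∧ (1 : Equiv.Perm ℤ) n < a} = (Finset.Ico b a : Finset ℤ) := by
      ext n; simp
    rw [sF, this, Set.ncard_coe_finset, Int.card_Ico]
    omega
  omega

/-- The reduction theorem relative to one given value `δ` of the Demazure product. -/
lemma reduction_aux (G : Subgroup (Equiv.Perm ℤ)) (hG : ∀ g ∈ G, ASP g)
    (hGtri : ∀ a ∈ G, ∀ b ∈ G, ∀ c : Equiv.Perm ℤ, ASP c → IsTriL a b c → c ∈ G)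
    (L : List (Equiv.Perm ℤ)) (hL : ∀ a ∈ L, a ∈ G)
    (γ : Equiv.Perm ℤ) (hγ : γ ∈ G) (hsum : (L.map shiftASP).sum = shiftASP γ)
    (δ : Equiv.Perm ℤ) (hd : IsDemList L δ) (hge : BruhatLE γ δ) :
    ∃ M : List (Equiv.Perm ℤ),
      List.Forall₂ (fun β a => β ∈ G ∧ BruhatLEchi β a) M L ∧
      M.prod = γ ∧ IsDemList M γ ∧
      ∀ (n : ℕ) (h : n < M.length),
        InvSet (M.get ⟨n, h⟩) ∩ InvSet ((M.drop (n + 1)).prod)⁻¹ = ∅ := by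
  induction L generalizing γ δ with
  | nil =>
    have h1 : γ = 1 := eq_one_of_le (hG γ hγ) (by simpa using hsum.symm)
      (by rwa [show δ = 1 from hd] at hge)
    exact ⟨[], List.Forall₂.nil, h1.symm, h1, fun n h => absurd h (by simp)⟩
  | cons α L ih =>
    obtain ⟨ε, hε, he, hdem⟩ := hd
    have hα : α ∈ G := hL α List.mem_cons_self
    have hL' : ∀ a ∈ L, a ∈ G := fun a ha => hL a (List.mem_cons_of_mem _ ha)
    obtain ⟨c, hc, htri⟩ := exists_tri (hG γ hγ) hε
    have hcG := tri_mem G hG hGtri L hL' γ hγ ε he c hc htri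
    have hβG : c⁻¹ * γ ∈ G := G.mul_mem (G.inv_mem hcG) hγ
    have hred := tri_reduced (hG γ hγ) hc htri
    have hmul : c * (c⁻¹ * γ) = γ := by simp
    have hdem' : IsDem c (c⁻¹ * γ) γ := by
      have := dem_of_reduced hc (hG _ hβG) (by rw [hmul]; exact hG γ hγ) hred
      rwa [hmul] at this
    have hε_shift := shift_demList L (fun a ha => hG a (hL' a ha)) ε hε he
    have hc_shift := shift_tri (hG γ hγ) hε hc htri
    have hγ_shift := shift_dem hc (hG _ hβG) (hG γ hγ) hdem'
    simp only [List.map_cons, List.sum_cons] at hsum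
    have hle : BruhatLE c α := fun a b => by
      obtain ⟨l, hl⟩ := (isTri_iff.mp htri).2 a b
      have h1 := hge a l
      have h2 := (isDem_iff.mp hdem).1 a l b
      omega
    obtain ⟨M, hM, hprod, hMdem, hMred⟩ := ih hL' (c⁻¹ * γ) hβG (by omega) ε he
      (tri_le (hG γ hγ) hc (hG _ hβG) htri)
    refine ⟨c :: M, List.Forall₂.cons ⟨hcG, hle, by omega⟩ hM, by rw [List.prod_cons, hprod, hmul],
      ⟨_, hG _ hβG, hMdem, hdem'⟩, fun n h => ?_⟩
    cases n with
    | zero => simpa [hprod] using hred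
    | succ n => exact hMred n (by simpa using h)

/-- Reduction theorem for several factors: if `G ≤ ASP` is closed under `◁`,
`α₁, …, α_ℓ, γ ∈ G`, `α₁ ⋆ ⋯ ⋆ α_ℓ ≥ γ` and the shifts add up to `χ_γ`, then there is a
reduced tuple `(β₁, …, β_ℓ)` in `G` with `β_i ≤_χ α_i` and
`β₁ ⋆ ⋯ ⋆ β_ℓ = β₁ ∘ ⋯ ∘ β_ℓ = γ`. -/
theorem reduction_theorem_list (G : Subgroup (Equiv.Perm ℤ)) (hG : ∀ g ∈ G, ASP g)
    (hGtri : ∀ a ∈ G, ∀ b ∈ G, ∀ c : Equiv.Perm ℤ, ASP c → IsTriL a b c → c ∈ G)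
    (L : List (Equiv.Perm ℤ)) (hL : ∀ a ∈ L, a ∈ G)
    (γ : Equiv.Perm ℤ) (hγ : γ ∈ G)
    (hsum : (L.map shiftASP).sum = shiftASP γ)
    (hge : ∀ δ : Equiv.Perm ℤ, ASP δ → IsDemList L δ → BruhatLE γ δ) :
    ∃ M : List (Equiv.Perm ℤ),
      List.Forall₂ (fun β a => β ∈ G ∧ BruhatLEchi β a) M L ∧
      M.prod = γ ∧ IsDemList M γ ∧
      ∀ (n : ℕ) (h : n < M.length),
        InvSet (M.get ⟨n, h⟩) ∩ InvSet ((M.drop (n + 1)).prod)⁻¹ = ∅ := by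
  obtain ⟨δ, hδ, hd⟩ := exists_demList L fun a ha => hG a (hL a ha)
  exact reduction_aux G hG hGtri L hL γ hγ hsum δ hd (hge δ hδ hd)
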